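/- Let (S(n), F(n)) be a centered martingale satisfying sup_n P(|S(n)|/σ(n) > x) ≤ exp(−c x^r) for all x > 0 with c₁ n^γ ≤ σ(n) ≤ c₂ n^γ, γ, r > 0, and set v_r(n) = (log log(n+3))^{1/r}. Then with probability one, limsup_{n→∞} S(n)/(σ(n) v_r(n)) ≤ C for some finite deterministic constant C. -/

import Mathlib

open MeasureTheory ProbabilityTheory Real Filter

/-!
Doob's inequality for the submartingale `(X n - s x)⁺` bounds the probability that `X` exceeds
`2 s x` before time `N` by `𝔼[(X N - s x)⁺] / (s x)`. By the layer-cake formula, the tail bound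
`exp (-c x ^ r)` for `X N / s` makes this at most a constant times `exp (-(c / 2) x ^ r) / x`, so
that passing from `X N` to the running maximum only costs a factor in the exponent.

Take `N = 2 ^ (k + 1)`, `s = σ N` and `x = (4 / c) ^ (1 / r) * v_r (2 ^ k)`. The exponential is then
`(log (2 ^ k + 3))⁻²`, of order `k⁻²`, and Borel–Cantelli controls all but finitely many dyadic
blocks. Inside a block `σ` varies by a bounded factor and `v_r` is monotone. A martingale is
handled through the submartingale `|S|`, which also bounds the ratio from below, so that its
real-valued `limsup` is a genuine one.
-/

section LoglogScale

/-- The normalisation `v_r(n) = (log log (n + 3)) ^ (1 / r)` of the law of the iterated logarithm;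
the shift by `3` makes it positive at every `n`. -/
noncomputable def loglogScale (r : ℝ) (n : ℕ) : ℝ :=
  (Real.log (Real.log ((n : ℝ) + 3))) ^ (1 / r)

lemma one_lt_log_natCast_add_three (n : ℕ) : 1 < Real.log ((n : ℝ) + 3) := by
  rw [Real.lt_log_iff_exp_lt (by positivity)]
  linarith [Real.exp_one_lt_d9, n.cast_nonneg (α := ℝ)]

lemma loglogScale_pos (r : ℝ) (n : ℕ) : 0 < loglogScale r n :=
  Real.rpow_pos_of_pos (Real.log_pos (one_lt_log_natCast_add_three n)) _

lemma loglogScale_mono {r : ℝ} (hr : 0 ≤ r) : Monotone (loglogScale r) := by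
  intro m n hmn
  have one_lt_log := one_lt_log_natCast_add_three m
  have loglog_nonneg : 0 ≤ Real.log (Real.log ((m : ℝ) + 3)) := Real.log_nonneg one_lt_log.le
  unfold loglogScale
  gcongr

lemma loglogScale_rpow {r : ℝ} (hr : r ≠ 0) (n : ℕ) :
    loglogScale r n ^ r = Real.log (Real.log ((n : ℝ) + 3)) := by
  rw [loglogScale, one_div,
    Real.rpow_inv_rpow (Real.log_pos (one_lt_log_natCast_add_three n)).le hr]

lemma exp_neg_half_mul_loglogScale_rpow {c r : ℝ} (hc : 0 < c) (hr : r ≠ 0) (n : ℕ) :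
    Real.exp (-(c / 2) * ((4 / c) ^ (1 / r) * loglogScale r n) ^ r) =
      1 / Real.log ((n : ℝ) + 3) ^ 2 := by
  have log_pos : 0 < Real.log ((n : ℝ) + 3) := one_pos.trans (one_lt_log_natCast_add_three n)
  have exponent_eq : -(c / 2) * ((4 / c) ^ (1 / r) * loglogScale r n) ^ r =
      -Real.log (Real.log ((n : ℝ) + 3) ^ 2) := by
    rw [Real.mul_rpow (by positivity) (loglogScale_pos r n).le, loglogScale_rpow hr, one_div,
      Real.rpow_inv_rpow (by positivity) hr, Real.log_pow]
    field_simp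
    ring
  rw [exponent_eq, Real.exp_neg, Real.exp_log (by positivity), one_div]

lemma summable_one_div_log_two_pow_sq :
    Summable fun k : ℕ => 1 / Real.log (((2 ^ k : ℕ) : ℝ) + 3) ^ 2 := by
  have succ_le (k : ℕ) : ((k + 1 : ℕ) : ℝ) ≤ 3 * Real.log (((2 ^ k : ℕ) : ℝ) + 3) := by
    have mul_log_two_le : k * Real.log 2 ≤ Real.log (((2 ^ k : ℕ) : ℝ) + 3) := by
      rw [← Real.log_pow]
      exact Real.log_le_log (by positivity) (by push_cast; linarith)
    have half_mul_le : k * (1 / 2 : ℝ) ≤ k * Real.log 2 := by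
      gcongr
      linarith [Real.log_two_gt_d9]
    rw [Nat.cast_succ]
    linarith [one_lt_log_natCast_add_three (2 ^ k)]
  refine .of_nonneg_of_le (fun k => by positivity) (fun k => ?_)
    (((summable_nat_add_iff 1).2 (Real.summable_one_div_nat_pow.2 one_lt_two)).mul_left 9)
  calc 1 / Real.log (((2 ^ k : ℕ) : ℝ) + 3) ^ 2
      = 9 * (1 / (3 * Real.log (((2 ^ k : ℕ) : ℝ) + 3)) ^ 2) := by ring
    _ ≤ 9 * (1 / ((k + 1 : ℕ) : ℝ) ^ 2) := by gcongr; exact succ_le k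

end LoglogScale

section GrowthAndLimsup

lemma tendsto_natLog_atTop {b : ℕ} (hb : 1 < b) : Tendsto (Nat.log b) atTop atTop :=
  tendsto_atTop_atTop.2 fun k => ⟨b ^ k, fun _ hn => Nat.le_log_of_pow_le hb hn⟩

lemma le_const_mul_of_le_two_mul_of_rpow_bounds {σ : ℕ → ℝ} {c₁ c₂ γ : ℝ} (hc₁ : 0 < c₁)
    (hc₂ : 0 ≤ c₂) (hγ : 0 ≤ γ)
    (hσ : ∀ n : ℕ, 1 ≤ n → c₁ * (n : ℝ) ^ γ ≤ σ n ∧ σ n ≤ c₂ * (n : ℝ) ^ γ)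
    {n m : ℕ} (hn : 1 ≤ n) (hnm : n ≤ m) (hmn : m ≤ 2 * n) :
    σ m ≤ c₂ / c₁ * 2 ^ γ * σ n := by
  have cast_le : (m : ℝ) ≤ 2 * n := mod_cast hmn
  calc σ m ≤ c₂ * (m : ℝ) ^ γ := (hσ m (hn.trans hnm)).2
    _ ≤ c₂ * (2 * n : ℝ) ^ γ := by gcongr
    _ = c₂ / c₁ * 2 ^ γ * (c₁ * (n : ℝ) ^ γ) := by
        rw [Real.mul_rpow zero_le_two n.cast_nonneg]
        field_simp
    _ ≤ c₂ / c₁ * 2 ^ γ * σ n := by gcongr; exact (hσ n hn).1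

lemma limsup_div_le_of_eventually_abs_le_mul {ι : Type*} {l : Filter ι} [l.NeBot] {f g : ι → ℝ}
    {C : ℝ} (hg : ∀ i, 0 < g i) (hfg : ∀ᶠ i in l, |f i| ≤ C * g i) :
    limsup (fun i => f i / g i) l ≤ C := by
  have abs_div_le : ∀ᶠ i in l, |f i / g i| ≤ C := hfg.mono fun i hi => by
    rwa [abs_div, abs_of_pos (hg i), div_le_iff₀ (hg i)]
  have bounded_below : IsBoundedUnder (· ≥ ·) l fun i => f i / g i :=
    isBoundedUnder_of_eventually_ge (abs_div_le.mono fun i hi => (abs_le.1 hi).1)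
  exact limsup_le_of_le bounded_below.isCoboundedUnder_le
    (abs_div_le.mono fun i hi => (abs_le.1 hi).2)

end GrowthAndLimsup

section Tails

variable {Ω : Type*} {m : MeasurableSpace Ω} {μ : Measure Ω}

lemma integral_posPart_sub_le_of_exp_tail [IsFiniteMeasure μ] {Y : Ω → ℝ} (hY : Integrable Y μ)
    {r c : ℝ} (hr : 0 < r) (hc : 0 < c)
    (htail : ∀ t : ℝ, 0 < t → μ.real {ω | t < Y ω} ≤ Real.exp (-c * t ^ r))
    {x : ℝ} (hx : 0 ≤ x) :
    ∫ ω, max (Y ω - x) 0 ∂μ ≤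
      Real.exp (-(c / 2) * x ^ r) * ∫ t in Set.Ioi 0, Real.exp (-(c / 2) * t ^ r) := by
  have exp_integrable : IntegrableOn (fun t : ℝ => Real.exp (-(c / 2) * t ^ r)) (Set.Ioi 0) := by
    simpa using integrableOn_rpow_mul_exp_neg_mul_rpow (s := 0) (by norm_num) hr (half_pos hc)
  have excess_tail_le (t : ℝ) (ht : 0 < t) : μ.real {ω | t < max (Y ω - x) 0} ≤
      Real.exp (-(c / 2) * x ^ r) * Real.exp (-(c / 2) * t ^ r) := by
    have set_eq : {ω | t < max (Y ω - x) 0} = {ω | x + t < Y ω} := by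
      ext ω
      simp [ht.not_gt, lt_sub_iff_add_lt']
    have rpow_left_le : x ^ r ≤ (x + t) ^ r := by gcongr; linarith
    have rpow_right_le : t ^ r ≤ (x + t) ^ r := by gcongr; linarith
    rw [set_eq, ← Real.exp_add]
    refine (htail (x + t) (by linarith)).trans (Real.exp_le_exp.2 ?_)
    nlinarith
  have excess_integrable : Integrable (fun ω => max (Y ω - x) 0) μ :=
    (hY.sub (integrable_const x)).pos_part
  rw [excess_integrable.integral_eq_integral_meas_lt (ae_of_all _ fun ω => le_max_right _ _),
    ← integral_const_mul]
  exact integral_mono_of_nonneg (ae_of_all _ fun t => measureReal_nonneg)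
    (exp_integrable.const_mul _)
    ((ae_restrict_iff' measurableSet_Ioi).2 (ae_of_all _ excess_tail_le))

lemma ae_eventually_notMem_of_summable_measureReal [IsFiniteMeasure μ] {E : ℕ → Set Ω}
    (hE : Summable fun k => μ.real (E k)) : ∀ᵐ ω ∂μ, ∀ᶠ k in atTop, ω ∉ E k :=
  ae_eventually_notMem (by simpa [ofReal_measureReal] using hE.tsum_ofReal_ne_top)

end Tails

section Submartingale

variable {Ω : Type*} {m : MeasurableSpace Ω} {μ : Measure Ω} {ℱ : Filtration ℕ m}

lemma submartingale_abs_of_martingale {S : ℕ → Ω → ℝ} (hS : Martingale S ℱ μ) :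
    Submartingale (fun n ω => |S n ω|) ℱ μ :=
  hS.submartingale.sup hS.neg.submartingale

variable [IsFiniteMeasure μ] {X : ℕ → Ω → ℝ}

lemma mul_measureReal_exists_le_le_integral_posPart (hX : Submartingale X ℱ μ) (N : ℕ)
    {a b : ℝ} (hab : a ≤ b) :
    (b - a) * μ.real {ω | ∃ n ≤ N, b ≤ X n ω} ≤ ∫ ω, max (X N ω - a) 0 ∂μ := by
  have excess_submartingale : Submartingale (fun n ω => max (X n ω - a) 0) ℱ μ :=
    (hX.sub_martingale (martingale_const ℱ μ a)).pos
  lift b - a to NNReal using sub_nonneg.2 hab with ε hε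
  set M : Set Ω := {ω | (ε : ℝ) ≤ (Finset.range (N + 1)).sup' Finset.nonempty_range_add_one
    fun n => max (X n ω - a) 0}
  have exceeds_subset : {ω | ∃ n ≤ N, b ≤ X n ω} ⊆ M := by
    rintro ω ⟨n, hn, hbX⟩
    have le_excess : (ε : ℝ) ≤ max (X n ω - a) 0 := by
      rw [hε]
      exact le_max_of_le_left (sub_le_sub_right hbX a)
    exact Finset.le_sup'_of_le (fun n => max (X n ω - a) 0) (Finset.mem_range_succ_iff.2 hn)
      le_excess
  have doob : (ε : ENNReal) * μ M ≤ ENNReal.ofReal (∫ ω in M, max (X N ω - a) 0 ∂μ) :=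
    maximal_ineq excess_submartingale (fun n ω => le_max_right _ _) N
  calc (ε : ℝ) * μ.real {ω | ∃ n ≤ N, b ≤ X n ω}
      ≤ ε * μ.real M := by gcongr; finiteness
    _ ≤ ∫ ω in M, max (X N ω - a) 0 ∂μ := by
        simpa [measureReal_def] using ENNReal.toReal_le_of_le_ofReal
          (integral_nonneg fun ω => le_max_right _ _) doob
    _ ≤ ∫ ω, max (X N ω - a) 0 ∂μ :=
        setIntegral_le_integral (excess_submartingale.integrable N)
          (ae_of_all _ fun ω => le_max_right _ _)

lemma measureReal_exists_two_mul_le_le_of_exp_tail (hX : Submartingale X ℱ μ) (N : ℕ)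
    {r c s x : ℝ} (hr : 0 < r) (hc : 0 < c) (hs : 0 < s) (hx : 0 < x)
    (htail : ∀ t : ℝ, 0 < t → μ.real {ω | t < X N ω / s} ≤ Real.exp (-c * t ^ r)) :
    μ.real {ω | ∃ n ≤ N, 2 * s * x ≤ X n ω} ≤
      Real.exp (-(c / 2) * x ^ r) * (∫ t in Set.Ioi 0, Real.exp (-(c / 2) * t ^ r)) / x := by
  have scaled_excess (ω : Ω) : max (X N ω - s * x) 0 = s * max (X N ω / s - x) 0 := by
    rw [mul_max_of_nonneg _ _ hs.le, mul_sub, mul_div_cancel₀ _ hs.ne', mul_zero]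
  have maximal := mul_measureReal_exists_le_le_integral_posPart hX N
    (show s * x ≤ 2 * s * x by nlinarith [mul_pos hs hx])
  have excess_le := integral_posPart_sub_le_of_exp_tail ((hX.integrable N).div_const s) hr hc
    htail hx.le
  simp only [scaled_excess, integral_const_mul] at maximal
  rw [le_div_iff₀ hx]
  refine le_of_mul_le_mul_left ?_ hs
  linarith [mul_le_mul_of_nonneg_left excess_le hs.le]

lemma ae_eventually_forall_le_two_pow_lt (hX : Submartingale X ℱ μ) {σ : ℕ → ℝ}
    (hσpos : ∀ n, 0 < σ n) {r c : ℝ} (hr : 0 < r) (hc : 0 < c)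
    (htail : ∀ n, ∀ x : ℝ, 0 < x → μ.real {ω | x < X n ω / σ n} ≤ Real.exp (-c * x ^ r)) :
    ∀ᵐ ω ∂μ, ∀ᶠ k : ℕ in atTop, ∀ n ≤ 2 ^ (k + 1),
      X n ω < 2 * σ (2 ^ (k + 1)) * ((4 / c) ^ (1 / r) * loglogScale r (2 ^ k)) := by
  set A : ℝ := (4 / c) ^ (1 / r)
  set K : ℝ := ∫ t in Set.Ioi 0, Real.exp (-(c / 2) * t ^ r)
  have A_pos : 0 < A := by positivity
  have : 0 ≤ K := integral_nonneg fun t => (Real.exp_pos _).le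
  have level_pos (n : ℕ) : 0 < A * loglogScale r n := mul_pos A_pos (loglogScale_pos r n)
  have block_le (k : ℕ) : μ.real {ω | ∃ n ≤ 2 ^ (k + 1),
      2 * σ (2 ^ (k + 1)) * (A * loglogScale r (2 ^ k)) ≤ X n ω} ≤
      1 / Real.log (((2 ^ k : ℕ) : ℝ) + 3) ^ 2 * (K / (A * loglogScale r 0)) := by
    refine (measureReal_exists_two_mul_le_le_of_exp_tail hX _ hr hc (hσpos _) (level_pos _)
      (htail _)).trans ?_
    rw [exp_neg_half_mul_loglogScale_rpow hc hr.ne', mul_div_assoc]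
    gcongr
    · exact level_pos 0
    · exact loglogScale_mono hr.le (Nat.zero_le _)
  have block_summable := Summable.of_nonneg_of_le (fun k => measureReal_nonneg) block_le
    (summable_one_div_log_two_pow_sq.mul_right _)
  filter_upwards [ae_eventually_notMem_of_summable_measureReal block_summable] with ω hω
  filter_upwards [hω] with k hk n hn
  exact lt_of_not_ge fun hle => hk ⟨n, hn, hle⟩

theorem stmt_9_general (hX : Submartingale X ℱ μ) {σ : ℕ → ℝ} (hσpos : ∀ n, 0 < σ n)
    {r c D : ℝ} (hr : 0 < r) (hc : 0 < c)
    (htail : ∀ n, ∀ x : ℝ, 0 < x → μ.real {ω | x < X n ω / σ n} ≤ Real.exp (-c * x ^ r))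
    (hσ : ∀ n m : ℕ, 1 ≤ n → n ≤ m → m ≤ 2 * n → σ m ≤ D * σ n) :
    ∃ C : ℝ, ∀ᵐ ω ∂μ, ∀ᶠ n in atTop, X n ω ≤ C * (σ n * loglogScale r n) := by
  set A : ℝ := (4 / c) ^ (1 / r)
  refine ⟨2 * D * A, ?_⟩
  filter_upwards [ae_eventually_forall_le_two_pow_lt hX hσpos hr hc htail] with ω hω
  filter_upwards [(tendsto_natLog_atTop one_lt_two).eventually hω, eventually_ge_atTop 1]
    with n hblock hn
  have two_pow_le : 2 ^ Nat.log 2 n ≤ n := Nat.pow_log_le_self 2 (Nat.pos_iff_ne_zero.1 hn)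
  have le_two_pow_succ : n ≤ 2 ^ (Nat.log 2 n + 1) := (Nat.lt_pow_succ_log_self one_lt_two n).le
  have σ_pos := hσpos (2 ^ (Nat.log 2 n + 1))
  have scale_pos := loglogScale_pos r n
  calc X n ω ≤ 2 * σ (2 ^ (Nat.log 2 n + 1)) * (A * loglogScale r (2 ^ Nat.log 2 n)) :=
        (hblock n le_two_pow_succ).le
    _ ≤ 2 * σ (2 ^ (Nat.log 2 n + 1)) * (A * loglogScale r n) := by
        gcongr
        exact loglogScale_mono hr.le two_pow_le
    _ ≤ 2 * (D * σ n) * (A * loglogScale r n) := by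
        gcongr
        exact hσ n _ hn le_two_pow_succ (by rw [pow_succ]; lia)
    _ = 2 * D * A * (σ n * loglogScale r n) := by ring

end Submartingale

theorem stmt_9
    {Ω : Type*} [MeasureSpace Ω] [IsProbabilityMeasure (ℙ : Measure Ω)]
    (ℱ : MeasureTheory.Filtration ℕ (by infer_instance : MeasurableSpace Ω))
    (S : ℕ → Ω → ℝ)
    (hmart : MeasureTheory.Martingale S ℱ ℙ)
    (hcent : ∀ n, ∫ ω, S n ω = 0)
    (σ : ℕ → ℝ)
    (hσdef : ∀ n, σ n = Real.sqrt (ProbabilityTheory.variance (S n) ℙ))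
    (hσpos : ∀ n, 0 < σ n)
    (hσmono : Monotone σ)
    (r c c₁ c₂ γ : ℝ) (hr : 0 < r) (hc : 0 < c) (hc₁ : 0 < c₁) (hc₂ : 0 < c₂) (hγ : 0 < γ)
    (htail : ∀ n, ∀ x : ℝ, 0 < x →
      (ℙ {ω | |S n ω| / σ n > x}).toReal ≤ Real.exp (- c * x ^ r))
    (hσbound : ∀ n : ℕ, 1 ≤ n → c₁ * (n : ℝ) ^ γ ≤ σ n ∧ σ n ≤ c₂ * (n : ℝ) ^ γ) :
    ∃ C : ℝ, ∀ᵐ ω ∂(ℙ : Measure Ω),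
      Filter.limsup (fun n : ℕ =>
        S n ω / (σ n * (Real.log (Real.log ((n : ℝ) + 3))) ^ (1 / r))) atTop ≤ C := by
  obtain ⟨C, hC⟩ := stmt_9_general (submartingale_abs_of_martingale hmart) hσpos hr hc htail
    fun n m => le_const_mul_of_le_two_mul_of_rpow_bounds hc₁ hc₂.le hγ.le hσbound
  exact ⟨C, hC.mono fun ω => limsup_div_le_of_eventually_abs_le_mul fun n =>
    mul_pos (hσpos n) (loglogScale_pos r n)⟩
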